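/- arXiv:1109.2860 — 7 statements merged into one kernel-verified Lean document; each statement's English description precedes it below -/
import Mathlib

section
/- Let n be an integer with n > 4 such that n is not divisible by 2 and not divisible by 3, and let ζ = exp(2πi/n) ∈ ℂ. Then the product over k = 1 to n−1 of (1 − ζ^k + ζ^{2k}) equals 1. -/
theorem IsPrimitiveRoot.prod_range_one_add_pow {R : Type*} [CommRing R] [IsDomain R] {n : ℕ}
    {μ : R} (hμ : IsPrimitiveRoot μ n) (hn : Odd n) :
    ∏ k ∈ Finset.range n, (1 + μ ^ k) = 2 := by
  classical
  have h := hμ.pow_add_pow_eq_prod_add_mul 1 1 hn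
  have hinj : Set.InjOn (fun k => μ ^ k) (Finset.range n : Set ℕ) := by
    intro i hi j hj hij
    exact hμ.pow_inj (by simpa using hi) (by simpa using hj) hij
  have himage : (Finset.range n).image (fun k => μ ^ k) = Polynomial.nthRootsFinset n (1 : R) := by
    refine Finset.eq_of_subset_of_card_le ?_ ?_
    · intro x hx
      obtain ⟨k, -, rfl⟩ := Finset.mem_image.mp hx
      rw [Polynomial.mem_nthRootsFinset hn.pos, pow_right_comm, hμ.pow_eq_one, one_pow]
    · rw [Finset.card_image_of_injOn hinj, hμ.card_nthRootsFinset, Finset.card_range]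
  rw [← himage, Finset.prod_image hinj] at h
  simpa [one_add_one_eq_two] using h.symm

/-- Let `n > 4` be an integer not divisible by `2` or `3`, and let
`ζ = exp(2πi/n)`.  Then `∏_{k=1}^{n-1} (1 - ζ^k + ζ^{2k}) = 1`. -/
theorem prod_one_sub_zeta_add_zeta_sq (n : ℕ) (hn : 4 < n) (h2 : ¬ (2 ∣ n))
    (h3 : ¬ (3 ∣ n)) (ζ : ℂ) (hζ : ζ = Complex.exp (2 * Real.pi * Complex.I / n)) :
    ∏ k ∈ Finset.Icc 1 (n - 1), (1 - ζ ^ k + ζ ^ (2 * k)) = 1 := by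
  have hprim : IsPrimitiveRoot ζ n := hζ ▸ Complex.isPrimitiveRoot_exp n (by omega)
  have hodd : Odd n := Nat.not_even_iff_odd.mp fun h => h2 h.two_dvd
  have hprim3 : IsPrimitiveRoot (ζ ^ 3) n :=
    hprim.pow_of_coprime 3 ((Nat.Prime.coprime_iff_not_dvd Nat.prime_three).mpr h3)
  have hrange : Finset.range n = insert 0 (Finset.Icc 1 (n - 1)) := by
    ext k
    simp only [Finset.mem_range, Finset.mem_insert, Finset.mem_Icc]
    omega
  have hfactor : (∏ k ∈ Finset.range n, (1 - ζ ^ k + ζ ^ (2 * k))) *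
      ∏ k ∈ Finset.range n, (1 + ζ ^ k) = ∏ k ∈ Finset.range n, (1 + (ζ ^ 3) ^ k) := by
    rw [← Finset.prod_mul_distrib]
    exact Finset.prod_congr rfl fun k _ => by ring
  rw [hprim.prod_range_one_add_pow hodd, hprim3.prod_range_one_add_pow hodd, hrange,
    Finset.prod_insert (by simp)] at hfactor
  simpa using hfactor
end

section
/- Let p be a prime with p ≥ 5, and let ζ be a primitive p-th root of unity in the p-th cyclotomic field over ℚ. Then the field norm from ℚ(ζ) to ℚ of 1 − ζ + ζ² equals 1. -/
/-- Let `p ≥ 5` be a prime and `ζ` a primitive `p`-th root of unity in the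
`p`-th cyclotomic field over `ℚ`.  Then `N_{ℚ(ζ)/ℚ}(1 - ζ + ζ^2) = 1`. -/
theorem norm_one_sub_zeta_add_zeta_sq (p : ℕ) (hp : p.Prime) (hp5 : 5 ≤ p)
    (ζ : CyclotomicField p ℚ) (hζ : IsPrimitiveRoot ζ p) :
    Algebra.norm ℚ (1 - ζ + ζ ^ 2) = 1 := by
  have : Fact p.Prime := ⟨hp⟩
  have p_ne_zero : (p : ℚ) ≠ 0 := Nat.cast_ne_zero.2 hp.ne_zero
  have : NeZero (p : ℚ) := ⟨p_ne_zero⟩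
  have : IsCyclotomicExtension {p} ℚ (CyclotomicField p ℚ) :=
    CyclotomicField.isCyclotomicExtension p ℚ
  have norm_sub_one {η : CyclotomicField p ℚ} (hη : IsPrimitiveRoot η p) :
      Algebra.norm ℚ (η - 1) = p :=
    hη.norm_sub_one_of_prime_ne_two' (Polynomial.cyclotomic.irreducible_rat hp.pos) (by omega)
  have two_coprime : Nat.Coprime 2 p := (Nat.coprime_primes Nat.prime_two hp).2 (by omega)
  have three_coprime : Nat.Coprime 3 p := (Nat.coprime_primes Nat.prime_three hp).2 (by omega)
  have six_coprime : Nat.Coprime 6 p := two_coprime.mul_left three_coprime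
  have factorization : (1 - ζ + ζ ^ 2) * ((ζ ^ 2 - 1) * (ζ ^ 3 - 1)) = (ζ ^ 6 - 1) * (ζ - 1) := by
    ring
  have norm_factorization := congrArg (Algebra.norm ℚ) factorization
  rw [map_mul, map_mul, map_mul, norm_sub_one hζ,
    norm_sub_one (hζ.pow_of_coprime 2 two_coprime),
    norm_sub_one (hζ.pow_of_coprime 3 three_coprime),
    norm_sub_one (hζ.pow_of_coprime 6 six_coprime)] at norm_factorization
  exact (mul_eq_right₀ (mul_ne_zero p_ne_zero p_ne_zero)).1 norm_factorization
end

section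
/- Let p be an odd prime and let ζ = exp(2πi/p) ∈ ℂ. Then the product over k = 1 to p−1 of (1 − ζ^k − ζ^{2k}) equals the p-th Lucas number L(p). -/
open Polynomial in
/-- The product of `1 - ζ ^ k * a` over all `k < n`, for `ζ` a primitive `n`-th root of unity. -/
lemma IsPrimitiveRoot.prod_one_sub_pow_mul {R : Type*} [CommRing R] [IsDomain R] {ζ : R} {n : ℕ}
    (h : IsPrimitiveRoot ζ n) (hn : 0 < n) (a : R) :
    ∏ k ∈ Finset.range n, (1 - ζ ^ k * a) = 1 - a ^ n := by
  simpa [eval_prod] using (congrArg (eval 1) (X_pow_sub_C_eq_prod h hn (rfl : a ^ n = a ^ n))).symm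

open Real in
/-- Binet's formula for Lucas numbers. -/
lemma Real.goldenRatio_pow_add_goldenConj_pow (n : ℕ) :
    goldenRatio ^ (n + 1) + goldenConj ^ (n + 1) = Nat.fib n + Nat.fib (n + 2) := by
  have h : (Nat.fib (n + 2) : ℝ) = Nat.fib n + Nat.fib (n + 1) := by
    exact_mod_cast Nat.fib_add_two
  linear_combination -fib_succ_sub_goldenRatio_mul_fib (n + 1)
    - fib_succ_sub_goldenConj_mul_fib (n + 1) + h
    - (Nat.fib (n + 1) : ℝ) * goldenRatio_add_goldenConj

/-- Let `p` be an odd prime and `ζ = exp(2πi/p)`.  Then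
`∏_{k=1}^{p-1} (1 - ζ^k - ζ^{2k}) = L(p)`, the `p`-th Lucas number,
where `L(n) = F(n-1) + F(n+1)`. -/
theorem prod_one_sub_zeta_sub_zeta_sq_eq_lucas (p : ℕ) (hp : p.Prime) (hodd : Odd p)
    (ζ : ℂ) (hζ : ζ = Complex.exp (2 * Real.pi * Complex.I / p)) :
    ∏ k ∈ Finset.Icc 1 (p - 1), (1 - ζ ^ k - ζ ^ (2 * k))
      = (Nat.fib (p - 1) + Nat.fib (p + 1) : ℂ) := by
  have hprim : IsPrimitiveRoot ζ p := hζ ▸ Complex.isPrimitiveRoot_exp p hp.ne_zero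
  have hadd : (Real.goldenRatio : ℂ) + Real.goldenConj = 1 := by
    exact_mod_cast Real.goldenRatio_add_goldenConj
  have hmul : (Real.goldenRatio : ℂ) * Real.goldenConj = -1 := by
    exact_mod_cast Real.goldenRatio_mul_goldenConj
  have hlucas : (Real.goldenRatio : ℂ) ^ p + (Real.goldenConj : ℂ) ^ p
      = Nat.fib (p - 1) + Nat.fib (p + 1) := by
    obtain ⟨n, rfl⟩ := Nat.exists_eq_succ_of_ne_zero hp.ne_zero
    exact_mod_cast Real.goldenRatio_pow_add_goldenConj_pow n
  have hmulpow : (Real.goldenRatio : ℂ) ^ p * (Real.goldenConj : ℂ) ^ p = -1 := by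
    rw [← mul_pow, hmul, hodd.neg_one_pow]
  have hfull : ∏ k ∈ Finset.range p, (1 - ζ ^ k - ζ ^ (2 * k))
      = (1 - (Real.goldenRatio : ℂ) ^ p) * (1 - (Real.goldenConj : ℂ) ^ p) := by
    rw [← hprim.prod_one_sub_pow_mul hp.pos, ← hprim.prod_one_sub_pow_mul hp.pos,
      ← Finset.prod_mul_distrib]
    refine Finset.prod_congr rfl fun k _ => ?_
    linear_combination ζ ^ k * hadd - ζ ^ (2 * k) * hmul
  have hsplit : Finset.range p = insert 0 (Finset.Icc 1 (p - 1)) := by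
    ext k
    have := hp.pos
    simp only [Finset.mem_range, Finset.mem_insert, Finset.mem_Icc]
    omega
  rw [hsplit, Finset.prod_insert (by simp)] at hfull
  linear_combination -hfull + hlucas - hmulpow
end

section
/- Let p be an odd prime and let ζ be a primitive p-th root of unity in the p-th cyclotomic field over ℚ. Then the field norm from ℚ(ζ) to ℚ of 1 − ζ − ζ² equals the p-th Lucas number L(p). -/
open Polynomial in
/-- The product of `x - σ ζ` over all embeddings `σ` is the cyclotomic polynomial at `x`. -/
theorem IsPrimitiveRoot.prod_embeddings_sub_eq_eval_cyclotomic {n : ℕ} [NeZero n]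
    {K L E : Type*} [Field K] [Field L] [Algebra K L] [IsCyclotomicExtension {n} K L]
    [Field E] [Algebra K E] [IsAlgClosed E] [NeZero (n : K)] [Fintype (L →ₐ[K] E)]
    {ζ : L} (hζ : IsPrimitiveRoot ζ n) (hirr : Irreducible (cyclotomic n K)) (x : E) :
    ∏ σ : L →ₐ[K] E, (x - σ ζ) = (cyclotomic n E).eval x := by
  have : NeZero (n : E) := NeZero.of_faithfulSMul K E n
  have hE := IsAlgClosed.exists_root _
    (degree_cyclotomic_pos n E (NeZero.pos n)).ne'
  obtain ⟨z, hz⟩ := hE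
  rw [isRoot_cyclotomic_iff] at hz
  rw [cyclotomic_eq_prod_X_sub_primitiveRoots hz, eval_prod]
  simp only [eval_sub, eval_X, eval_C]
  rw [← Finset.prod_coe_sort (primitiveRoots n E)]
  refine Fintype.prod_equiv (hζ.embeddingsEquivPrimitiveRoots E hirr) _ _ fun σ => ?_
  simp

open Polynomial Real goldenRatio in
/-- The values of `Φ_p` at `-φ` and `-ψ` multiply to the `p`-th Lucas number. -/
theorem eval_cyclotomic_neg_goldenRatio_mul_eval_neg_goldenConj {p : ℕ} (hp : p.Prime)
    (hodd : Odd p) :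
    (cyclotomic p ℝ).eval (-φ) * (cyclotomic p ℝ).eval (-ψ) =
      Nat.fib (p - 1) + Nat.fib (p + 1) := by
  have : Fact p.Prime := ⟨hp⟩
  have key (x : ℝ) : (cyclotomic p ℝ).eval (-x) * (x + 1) = x ^ p + 1 := by
    have h := congrArg (eval (-x)) (cyclotomic_prime_mul_X_sub_one ℝ p)
    simp only [eval_mul, eval_sub, eval_X, eval_one, eval_pow, hodd.neg_pow] at h
    linear_combination -h
  have hsum : φ + ψ = 1 := goldenRatio_add_goldenConj
  have hprod : φ * ψ = -1 := goldenRatio_mul_goldenConj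
  have hpow : φ ^ p * ψ ^ p = -1 := by rw [← mul_pow, hprod, hodd.neg_one_pow]
  have hlucas : φ ^ p + ψ ^ p = Nat.fib (p - 1) + Nat.fib (p + 1) := by
    obtain ⟨n, rfl⟩ := Nat.exists_eq_succ_of_ne_zero hp.ne_zero
    have h₁ := goldenRatio_mul_fib_succ_add_fib n
    have h₂ := goldenConj_mul_fib_succ_add_fib n
    simp only [Nat.succ_eq_add_one, add_tsub_cancel_right, Nat.fib_add_two, Nat.cast_add]
    linear_combination (Nat.fib (n + 1) : ℝ) * hsum - h₁ - h₂
  have hone : (φ + 1) * (ψ + 1) = 1 := by linear_combination hprod + hsum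
  calc (cyclotomic p ℝ).eval (-φ) * (cyclotomic p ℝ).eval (-ψ)
      = ((cyclotomic p ℝ).eval (-φ) * (φ + 1)) * ((cyclotomic p ℝ).eval (-ψ) * (ψ + 1)) := by
        linear_combination
          -((cyclotomic p ℝ).eval (-φ) * (cyclotomic p ℝ).eval (-ψ)) * hone
    _ = Nat.fib (p - 1) + Nat.fib (p + 1) := by
        rw [key, key]
        linear_combination hpow + hlucas

open Polynomial Real goldenRatio in
/-- Let `p` be an odd prime and `ζ` a primitive `p`-th root of unity in the
`p`-th cyclotomic field over `ℚ`.  Then `N_{ℚ(ζ)/ℚ}(1 - ζ - ζ^2) = L(p)`,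
the `p`-th Lucas number, where `L(n) = F(n-1) + F(n+1)`. -/
theorem norm_one_sub_zeta_sub_zeta_sq_eq_lucas (p : ℕ) (hp : p.Prime) (hodd : Odd p)
    (ζ : CyclotomicField p ℚ) (hζ : IsPrimitiveRoot ζ p) :
    Algebra.norm ℚ (1 - ζ - ζ ^ 2) = (Nat.fib (p - 1) + Nat.fib (p + 1) : ℚ) := by
  have : NeZero p := ⟨hp.ne_zero⟩
  have : IsCyclotomicExtension {p} ℚ (CyclotomicField p ℚ) := by
    convert CyclotomicField.isCyclotomicExtension p ℚ
    · rfl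
    · exact Subsingleton.elim (α := Algebra ℚ (CyclotomicField p ℚ)) _ _
  have hirr : Irreducible (cyclotomic p ℚ) := cyclotomic.irreducible_rat hp.pos
  have heven : Even (Fintype.card (CyclotomicField p ℚ →ₐ[ℚ] ℂ)) := by
    rw [AlgHom.card, IsCyclotomicExtension.finrank (CyclotomicField p ℚ) hirr,
      Nat.totient_prime hp]
    exact hodd.tsub_odd odd_one
  have hsum : (φ : ℂ) + ψ = 1 := mod_cast goldenRatio_add_goldenConj
  have hprod : (φ : ℂ) * ψ = -1 := mod_cast goldenRatio_mul_goldenConj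
  have hfactor (σ : CyclotomicField p ℚ →ₐ[ℚ] ℂ) :
      σ (1 - ζ - ζ ^ 2) = -((((-φ : ℝ) : ℂ) - σ ζ) * (((-ψ : ℝ) : ℂ) - σ ζ)) := by
    simp only [map_sub, map_one, map_pow, Complex.ofReal_neg]
    linear_combination σ ζ * hsum + hprod
  have heval (x : ℝ) : (cyclotomic p ℂ).eval (x : ℂ) = ((cyclotomic p ℝ).eval x : ℝ) := by
    rw [← map_cyclotomic p Complex.ofRealHom]
    exact eval_map_apply Complex.ofRealHom x
  apply (algebraMap ℚ ℂ).injective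
  rw [Algebra.norm_eq_prod_embeddings, Finset.prod_congr rfl fun σ _ => hfactor σ,
    Finset.prod_neg, Finset.card_univ, heven.neg_one_pow, one_mul, Finset.prod_mul_distrib,
    hζ.prod_embeddings_sub_eq_eval_cyclotomic hirr,
    hζ.prod_embeddings_sub_eq_eval_cyclotomic hirr, heval, heval, ← Complex.ofReal_mul,
    eval_cyclotomic_neg_goldenRatio_mul_eval_neg_goldenConj hp hodd]
  simp
end

section
/- Let p be an odd prime and let ζ = exp(2πi/p) ∈ ℂ. Then the product over k = 1 to p−1 of (1 + ζ^k − ζ^{2k}) equals the p-th Lucas number L(p). -/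
/-- The roots of `X ^ 2 - X - 1` have Lucas numbers as power sums. -/
theorem pow_succ_add_pow_succ_eq_fib_add_fib {R : Type*} [CommRing R] {a b : R}
    (hadd : a + b = 1) (hmul : a * b = -1) (n : ℕ) :
    a ^ (n + 1) + b ^ (n + 1) = Nat.fib n + Nat.fib (n + 2) := by
  induction n using Nat.twoStepInduction with
  | zero => simp [hadd]
  | one =>
    norm_num [Nat.fib_add_two]
    linear_combination (a + b + 1) * hadd - 2 * hmul
  | more n ih₁ ih₂ =>
    have h₁ : Nat.fib (n + 2) = Nat.fib n + Nat.fib (n + 1) := Nat.fib_add_two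
    have h₂ : Nat.fib (n + 2 + 2) = Nat.fib (n + 2) + Nat.fib (n + 1 + 2) := Nat.fib_add_two
    rw [h₂]
    rw [h₁] at ih₁ ⊢
    push_cast at ih₁ ih₂ ⊢
    linear_combination ih₁ + ih₂ + (a ^ (n + 2) + b ^ (n + 2)) * hadd
      - (a ^ (n + 1) + b ^ (n + 1)) * hmul

theorem IsPrimitiveRoot.prod_range_sub_pow {R : Type*} [CommRing R] [IsDomain R] {ζ : R} {n : ℕ}
    (hζ : IsPrimitiveRoot ζ n) (hn : 0 < n) (x : R) :
    ∏ k ∈ Finset.range n, (x - ζ ^ k) = x ^ n - 1 := by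
  simpa [Polynomial.eval_prod] using
    (congrArg (Polynomial.eval x) (X_pow_sub_C_eq_prod hζ hn (one_pow n))).symm

/-- Let `p` be an odd prime and `ζ = exp(2πi/p)`.  Then
`∏_{k=1}^{p-1} (1 + ζ^k - ζ^{2k}) = L(p)`, the `p`-th Lucas number,
where `L(n) = F(n-1) + F(n+1)`. -/
theorem prod_one_add_zeta_sub_zeta_sq_eq_lucas (p : ℕ) (hp : p.Prime) (hodd : Odd p)
    (ζ : ℂ) (hζ : ζ = Complex.exp (2 * Real.pi * Complex.I / p)) :
    ∏ k ∈ Finset.Icc 1 (p - 1), (1 + ζ ^ k - ζ ^ (2 * k))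
      = (Nat.fib (p - 1) + Nat.fib (p + 1) : ℂ) := by
  have hprim : IsPrimitiveRoot ζ p := hζ ▸ Complex.isPrimitiveRoot_exp p hp.ne_zero
  have hadd : (Real.goldenRatio : ℂ) + Real.goldenConj = 1 :=
    mod_cast Real.goldenRatio_add_goldenConj
  have hmul : (Real.goldenRatio : ℂ) * Real.goldenConj = -1 :=
    mod_cast Real.goldenRatio_mul_goldenConj
  obtain ⟨n, rfl⟩ : ∃ n, p = n + 1 := ⟨p - 1, (Nat.sub_add_cancel hp.pos).symm⟩
  have hfactor (k : ℕ) : 1 + ζ ^ k - ζ ^ (2 * k) =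
      -1 * ((Real.goldenRatio - ζ ^ k) * (Real.goldenConj - ζ ^ k)) := by
    linear_combination hmul - ζ ^ k * hadd
  have hrange : ∏ k ∈ Finset.Icc 1 n, (1 + ζ ^ k - ζ ^ (2 * k)) =
      ∏ k ∈ Finset.range (n + 1), (1 + ζ ^ k - ζ ^ (2 * k)) := by
    rw [Finset.prod_range_eq_mul_Ico _ n.succ_pos]
    simp [Finset.Ico_add_one_right_eq_Icc]
  rw [Nat.add_sub_cancel, hrange, ← pow_succ_add_pow_succ_eq_fib_add_fib hadd hmul]
  simp_rw [hfactor, Finset.prod_mul_distrib, hprim.prod_range_sub_pow n.succ_pos]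
  rw [Finset.prod_const, Finset.card_range, hodd.neg_one_pow]
  have hpow := congrArg (· ^ (n + 1)) hmul
  simp only [mul_pow, hodd.neg_one_pow] at hpow
  linear_combination -hpow
end

section
/- Let n be an integer with n > 4 such that n is not divisible by 2 and not divisible by 3. Then the product over k = 1 to n−1 of cos(3πk/n) equals the product over k = 1 to n−1 of cos(πk/n). -/
/-- Multiplication by a unit modulo `n` permutes the nonzero residues, so it leaves unchanged the
product over them of an `n`-periodic function. -/
theorem Function.Periodic.prod_Icc_mul_left {M : Type*} [CommMonoid M] {f : ℕ → M} {n a : ℕ}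
    (hf : Function.Periodic f n) (hn : 0 < n) (ha : n.Coprime a) :
    ∏ k ∈ Finset.Icc 1 (n - 1), f (a * k) = ∏ k ∈ Finset.Icc 1 (n - 1), f k := by
  have hmaps : Set.MapsTo (fun k => a * k % n) (Finset.Icc 1 (n - 1)) (Finset.Icc 1 (n - 1)) := by
    intro k hk
    simp only [Finset.coe_Icc, Set.mem_Icc] at hk ⊢
    have hlt := Nat.mod_lt (a * k) hn
    have hne : a * k % n ≠ 0 := fun h =>
      Nat.not_dvd_of_pos_of_lt (by omega) (by omega)
        (ha.dvd_of_dvd_mul_left (Nat.dvd_of_mod_eq_zero h))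
    omega
  have hinj : Set.InjOn (fun k => a * k % n) (Finset.Icc 1 (n - 1)) := by
    intro k hk l hl hkl
    simp only [Finset.coe_Icc, Set.mem_Icc] at hk hl
    have hmod : k ≡ l [MOD n] := Nat.ModEq.cancel_left_of_coprime ha hkl
    exact hmod.eq_of_lt_of_lt (by omega) (by omega)
  exact Finset.prod_nbij (fun k => a * k % n) hmaps hinj
    (Finset.surjOn_of_injOn_of_card_le _ hmaps hinj le_rfl) fun k _ => (hf.map_mod_nat _).symm

/-- For odd `n`, the sign `(-1) ^ m` turns the antiperiod `n` of `cos (π m / n)` into a period. -/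
theorem periodic_neg_one_pow_mul_cos {n : ℕ} (hn : Odd n) :
    Function.Periodic (fun m : ℕ => (-1) ^ m * Real.cos (Real.pi * m / n)) n := by
  intro m
  have hn0 : (n : ℝ) ≠ 0 := Nat.cast_ne_zero.mpr hn.pos.ne'
  have harg : Real.pi * ((m + n : ℕ) : ℝ) / n = Real.pi * m / n + Real.pi := by
    push_cast
    field_simp
  simp only [harg, Real.cos_add_pi, pow_add, hn.neg_one_pow]
  ring

/-- Let `n > 4` be an integer not divisible by `2` or `3`.  Then
`∏_{k=1}^{n-1} cos(3πk/n) = ∏_{k=1}^{n-1} cos(πk/n)`. -/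
theorem prod_cos_three_pi_eq_prod_cos_pi (n : ℕ) (hn : 4 < n) (h2 : ¬ (2 ∣ n))
    (h3 : ¬ (3 ∣ n)) :
    ∏ k ∈ Finset.Icc 1 (n - 1), Real.cos (3 * Real.pi * k / n)
      = ∏ k ∈ Finset.Icc 1 (n - 1), Real.cos (Real.pi * k / n) := by
  have hodd : Odd n := Nat.not_even_iff_odd.mp fun h => h2 h.two_dvd
  have hcop : n.Coprime 3 := ((Nat.Prime.coprime_iff_not_dvd Nat.prime_three).mpr h3).symm
  have hprod := (periodic_neg_one_pow_mul_cos hodd).prod_Icc_mul_left (by omega) hcop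
  have hsign : ∏ k ∈ Finset.Icc 1 (n - 1), (-1 : ℝ) ^ k ≠ 0 :=
    Finset.prod_ne_zero_iff.mpr fun k _ => pow_ne_zero k (by norm_num)
  refine mul_left_cancel₀ hsign ?_
  rw [← Finset.prod_mul_distrib, ← Finset.prod_mul_distrib, ← hprod]
  refine Finset.prod_congr rfl fun k _ => ?_
  have hcube : (-1 : ℝ) ^ 3 = -1 := by norm_num
  rw [pow_mul, hcube]
  push_cast
  ring_nf
end

section
/- Let p be a prime with p ≥ 5. Consider subsets S of ℤ/pℤ such that no two distinct elements of S are adjacent, i.e., for all i, j in S with i ≠ j one has j ≠ i + 1 and j ≠ i − 1. Then the sum of (−1)^{|S|} over all such subsets S (including the empty set) equals 1. -/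
open Finset in
/-- The independence polynomial, evaluated at `-1`, of the subgraph of `G` induced on `A`. -/
def SimpleGraph.altIndepSum {V : Type*} [DecidableEq V] (G : SimpleGraph V)
    [DecidableRel G.Adj] (A : Finset V) : ℤ :=
  ∑ S ∈ A.powerset, if G.IsIndepSet (S : Set V) then (-1) ^ #S else 0

namespace SimpleGraph

variable {V : Type*} [DecidableEq V] (G : SimpleGraph V) [DecidableRel G.Adj]

theorem altIndepSum_empty : G.altIndepSum ∅ = 1 := by
  simp [altIndepSum, IsIndepSet]

/-- Deletion of a vertex: the independent sets either avoid `v`, or contain `v` and avoid its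
neighbours. -/
theorem altIndepSum_insert {A : Finset V} {v : V} (hv : v ∉ A) :
    G.altIndepSum (insert v A) = G.altIndepSum A - G.altIndepSum {x ∈ A | ¬ G.Adj v x} := by
  have key (S : Finset V) (hS : S ⊆ A) : G.IsIndepSet ((insert v S : Finset V) : Set V) ↔
      G.IsIndepSet (S : Set V) ∧ ∀ x ∈ S, ¬ G.Adj v x := by
    have hvS : v ∉ (S : Set V) := fun h => hv (hS h)
    unfold IsIndepSet
    rw [Finset.coe_insert, Set.pairwise_insert_of_notMem hvS]
    simp [G.adj_comm _ v]
  rw [altIndepSum, Finset.sum_powerset_insert hv, sub_eq_add_neg, ← altIndepSum]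
  congr 1
  rw [altIndepSum, ← Finset.sum_neg_distrib]
  symm
  refine Finset.sum_subset_zero_on_sdiff
    (Finset.powerset_mono.2 (Finset.filter_subset _ _)) ?_ ?_
  · intro S hS
    rw [Finset.mem_sdiff, Finset.mem_powerset, Finset.mem_powerset] at hS
    refine if_neg fun h => hS.2 fun x hx => Finset.mem_filter.2 ⟨hS.1 hx, ?_⟩
    exact ((key S hS.1).1 h).2 x hx
  · intro S hS
    rw [Finset.mem_powerset] at hS
    have hSA : S ⊆ A := hS.trans (Finset.filter_subset _ _)
    have hadj : ∀ x ∈ S, ¬ G.Adj v x := fun x hx => (Finset.mem_filter.1 (hS hx)).2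
    simp only [(key S hSA).trans (and_iff_left hadj),
      Finset.card_insert_of_notMem fun h => hv (hSA h)]
    split_ifs <;> ring

end SimpleGraph

namespace ZMod

/-- The arc `{s, s + 1, …, s + m - 1}` of the circle `ZMod n`. -/
def arc {n : ℕ} (s : ZMod n) (m : ℕ) : Finset (ZMod n) :=
  (Finset.range m).image fun k : ℕ => s + k

variable {n : ℕ} (s : ZMod n) {m : ℕ}

theorem mem_arc {x : ZMod n} : x ∈ arc s m ↔ ∃ k < m, s + (k : ZMod n) = x := by
  simp [arc]

theorem arc_succ (m : ℕ) : arc s (m + 1) = insert (s + (m : ZMod n)) (arc s m) := by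
  simp [arc, Finset.range_add_one]

theorem natCast_inj_of_lt {a b : ℕ} (ha : a < n) (hb : b < n) :
    (a : ZMod n) = b ↔ a = b := by
  rw [ZMod.natCast_eq_natCast_iff', Nat.mod_eq_of_lt ha, Nat.mod_eq_of_lt hb]

theorem add_natCast_notMem_arc (hm : m < n) : s + (m : ZMod n) ∉ arc s m := by
  rw [mem_arc]
  rintro ⟨k, hk, h⟩
  rw [add_right_inj, natCast_inj_of_lt (hk.trans hm) hm] at h
  exact hk.ne h

theorem arc_self [NeZero n] : arc s n = Finset.univ := by
  ext x
  simp only [mem_arc, Finset.mem_univ, iff_true]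
  exact ⟨(x - s).val, ZMod.val_lt _, by simp⟩

end ZMod

namespace SimpleGraph

open ZMod

variable {n : ℕ} (s : ZMod n) {m : ℕ}

theorem circulantGraph_one_adj_natCast {k : ℕ} (hm : m < n) (hk : k < m) :
    (circulantGraph {(1 : ZMod n)}).Adj (s + (m : ZMod n)) (s + (k : ZMod n)) ↔
      k + 1 = m ∨ (k = 0 ∧ m + 1 = n) := by
  have hne : s + (m : ZMod n) ≠ s + (k : ZMod n) := by
    rw [Ne, add_right_inj, natCast_inj_of_lt hm (hk.trans hm)]
    exact hk.ne'
  have h₁ : s + (m : ZMod n) - (s + k) = 1 ↔ k + 1 = m := by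
    rw [← natCast_inj_of_lt (n := n) (by lia) hm, add_sub_add_left_eq_sub, sub_eq_iff_eq_add']
    push_cast
    exact eq_comm
  have h₂ : s + (k : ZMod n) - (s + m) = 1 ↔ k = 0 ∧ m + 1 = n := by
    rw [add_sub_add_left_eq_sub, sub_eq_iff_eq_add']
    rcases (Nat.succ_le_of_lt hm).lt_or_eq with h | h
    · have := natCast_inj_of_lt (hk.trans hm) h
      push_cast at this
      rw [this]
      lia
    · have hz : (m : ZMod n) + 1 = (0 : ℕ) := by
        rw [← Nat.cast_succ, h]
        simp
      rw [hz, natCast_inj_of_lt (hk.trans hm) (by lia)]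
      simp [← h]
  simp only [circulantGraph, fromRel_adj, Set.mem_singleton_iff, hne, h₁, h₂, ne_eq,
    not_false_eq_true, true_and]

theorem altIndepSum_arc_add_two (hm : m + 2 < n) :
    (circulantGraph {(1 : ZMod n)}).altIndepSum (arc s (m + 2)) =
      (circulantGraph {1}).altIndepSum (arc s (m + 1)) -
        (circulantGraph {1}).altIndepSum (arc s m) := by
  rw [arc_succ, altIndepSum_insert _ (add_natCast_notMem_arc s (by lia))]
  congr 2
  ext x
  simp only [Finset.mem_filter, mem_arc]
  constructor
  · rintro ⟨⟨k, hk, rfl⟩, h⟩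
    rw [circulantGraph_one_adj_natCast s (by lia) hk] at h
    exact ⟨k, by lia, rfl⟩
  · rintro ⟨k, hk, rfl⟩
    refine ⟨⟨k, by lia, rfl⟩, ?_⟩
    rw [circulantGraph_one_adj_natCast s (by lia) (by lia)]
    lia

theorem altIndepSum_univ_circulantGraph_one (m : ℕ) :
    (circulantGraph {(1 : ZMod (m + 3))}).altIndepSum Finset.univ =
      (circulantGraph {1}).altIndepSum (arc (0 : ZMod (m + 3)) (m + 2)) -
        (circulantGraph {1}).altIndepSum (arc (1 : ZMod (m + 3)) m) := by
  rw [← arc_self 0, arc_succ, altIndepSum_insert _ (add_natCast_notMem_arc _ (by lia))]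
  congr 2
  ext x
  simp only [Finset.mem_filter, mem_arc]
  constructor
  · rintro ⟨⟨k, hk, rfl⟩, h⟩
    rw [circulantGraph_one_adj_natCast _ (by lia) hk] at h
    obtain ⟨l, rfl⟩ : ∃ l, k = l + 1 := ⟨k - 1, by lia⟩
    exact ⟨l, by lia, by push_cast; ring⟩
  · rintro ⟨k, hk, rfl⟩
    have h : (1 : ZMod (m + 3)) + k = 0 + (k + 1 : ℕ) := by push_cast; ring
    refine ⟨⟨k + 1, by lia, h.symm⟩, ?_⟩
    rw [h, circulantGraph_one_adj_natCast _ (by lia) (by lia)]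
    lia

theorem altIndepSum_arc_zero : (circulantGraph {(1 : ZMod n)}).altIndepSum (arc s 0) = 1 :=
  altIndepSum_empty _

theorem altIndepSum_arc_one : (circulantGraph {(1 : ZMod n)}).altIndepSum (arc s 1) = 0 := by
  rw [arc_succ, altIndepSum_insert _ (by simp [arc])]
  simp [arc]

/-- The alternating independence sum of a proper arc is periodic of period `6` in its length. -/
theorem altIndepSum_arc_six_mul_add (q : ℕ) {r : ℕ} (h : 6 * q + r < n) :
    (circulantGraph {(1 : ZMod n)}).altIndepSum (arc s (6 * q + r)) =
      (circulantGraph {(1 : ZMod n)}).altIndepSum (arc s r) := by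
  induction q with
  | zero => simp
  | succ q ih =>
    rw [← ih (by lia), show 6 * (q + 1) + r = 6 * q + r + 6 by ring]
    have h₂ := altIndepSum_arc_add_two s (show 6 * q + r + 2 < n by lia)
    have h₃ := altIndepSum_arc_add_two s (show 6 * q + r + 1 + 2 < n by lia)
    have h₄ := altIndepSum_arc_add_two s (show 6 * q + r + 2 + 2 < n by lia)
    have h₅ := altIndepSum_arc_add_two s (show 6 * q + r + 3 + 2 < n by lia)
    have h₆ := altIndepSum_arc_add_two s (show 6 * q + r + 4 + 2 < n by lia)
    simp only [add_assoc, Nat.reduceAdd] at *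
    linarith

/-- The independence polynomial of a cycle of length coprime to `6` takes the value `1` at `-1`. -/
theorem altIndepSum_univ_circulantGraph_one_of_mod_six (hn : 5 ≤ n) [NeZero n]
    (h : n % 6 = 1 ∨ n % 6 = 5) :
    (circulantGraph {(1 : ZMod n)}).altIndepSum Finset.univ = 1 := by
  obtain ⟨m, rfl⟩ : ∃ m, n = m + 3 := ⟨n - 3, by lia⟩
  have univ_eq := altIndepSum_univ_circulantGraph_one m
  have val_two (s : ZMod (m + 3)) := altIndepSum_arc_add_two s (show 0 + 2 < m + 3 by lia)
  simp only [zero_add, altIndepSum_arc_zero, altIndepSum_arc_one] at val_two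
  have val_four (s : ZMod (m + 3)) (hm : 1 < m) :
      (circulantGraph {1}).altIndepSum (arc s 4) = 0 := by
    have h₃ := altIndepSum_arc_add_two s (show 1 + 2 < m + 3 by lia)
    have h₄ := altIndepSum_arc_add_two s (show 2 + 2 < m + 3 by lia)
    simp only [Nat.reduceAdd, altIndepSum_arc_one, val_two] at h₃ h₄
    linarith
  rcases h with h | h
  · obtain ⟨q, rfl⟩ : ∃ q, m = 6 * q + 4 := ⟨m / 6, by lia⟩
    rw [show 6 * q + 4 + 2 = 6 * (q + 1) + 0 by ring,
      altIndepSum_arc_six_mul_add _ _ (by lia), altIndepSum_arc_six_mul_add _ _ (by lia),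
      val_four _ (by lia), altIndepSum_arc_zero] at univ_eq
    simpa using univ_eq
  · obtain ⟨q, rfl⟩ : ∃ q, m = 6 * q + 2 := ⟨m / 6, by lia⟩
    rw [add_assoc (6 * q) 2 2,
      altIndepSum_arc_six_mul_add _ _ (by lia), altIndepSum_arc_six_mul_add _ _ (by lia),
      val_four _ (by lia), val_two] at univ_eq
    simpa using univ_eq

end SimpleGraph

/-- Let `p ≥ 5` be a prime.  Summing `(-1)^{|S|}` over all subsets `S` of
`ℤ/pℤ` in which no two distinct elements are adjacent (domino placements on a
circle of length `p`, including the empty one) gives `1`. -/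
theorem sum_neg_one_pow_card_domino_placements (p : ℕ) (hp : p.Prime)
    (hp5 : 5 ≤ p) [NeZero p] :
    ∑ S ∈ Finset.univ.filter
        (fun S : Finset (ZMod p) =>
          ∀ i ∈ S, ∀ j ∈ S, i ≠ j → j ≠ i + 1 ∧ j ≠ i - 1),
      (-1 : ℤ) ^ S.card = 1 := by
  have hmod : p % 6 = 1 ∨ p % 6 = 5 := by
    have h2 : ¬ 2 ∣ p := fun h => by
      have := (Nat.prime_dvd_prime_iff_eq Nat.prime_two hp).1 h
      lia
    have h3 : ¬ 3 ∣ p := fun h => by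
      have := (Nat.prime_dvd_prime_iff_eq Nat.prime_three hp).1 h
      lia
    lia
  refine Eq.trans ?_ (SimpleGraph.altIndepSum_univ_circulantGraph_one_of_mod_six hp5 hmod)
  rw [SimpleGraph.altIndepSum, Finset.powerset_univ, Finset.sum_filter]
  refine Finset.sum_congr rfl fun S _ => if_congr ?_ rfl rfl
  refine forall₂_congr fun i _ => forall₂_congr fun j _ => forall_congr' fun hij => ?_
  have h₁ : i - j = 1 ↔ j = i - 1 := by grind
  have h₂ : j - i = 1 ↔ j = i + 1 := by grind
  simp [SimpleGraph.circulantGraph, SimpleGraph.fromRel_adj, hij, h₁, h₂, and_comm]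
end
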